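/- Under the hypotheses of the scaling-function theorem (C repelling; r and #r⁻¹ continuous at the points of C; m_0 β-Lipschitz at the points of C satisfying the quadrature and low-pass conditions), assume in addition that r is averaging with respect to ρ and that |m_0| ≠ 1 on a set of positive ρ-measure. With V_0 = closure in L²(X_∞, λ_C) of {π(f)φ̂ : f ∈ L^∞(X, ρ)} and V_n = U^{-n} V_0, one has ⋂_{n∈ℤ} V_n = {0}. -/

import Mathlib

open MeasureTheory Filter Topology ENNReal

noncomputable section

abbrev Solenoid {X : Type*} (r : X → X) : Type _ :=
  {z : ℤ → X // ∀ n : ℤ, r (z (n + 1)) = z n}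

/-- The shift automorphism `r̂` on the solenoid, `(r̂ z) n = z (n-1)`. -/
def shiftHat {X : Type*} (r : X → X) (z : Solenoid r) : Solenoid r :=
  ⟨fun n => z.1 (n - 1), fun n => by
    have h := z.2 (n - 1)
    have h1 : n - 1 + 1 = n := by ring
    rw [h1] at h
    show r (z.1 (n + 1 - 1)) = z.1 (n - 1)
    have h2 : n + 1 - 1 = n := by ring
    rw [h2]
    exact h⟩

/-- The inverse of the shift automorphism `r̂`. -/
def shiftHatInv {X : Type*} (r : X → X) (z : Solenoid r) : Solenoid r :=
  ⟨fun n => z.1 (n + 1), fun n => z.2 (n + 1)⟩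

/-- Integer powers `r̂^n` of the shift automorphism. -/
def shiftHatZ {X : Type*} (r : X → X) : ℤ → Solenoid r → Solenoid r
  | Int.ofNat n => (shiftHat r)^[n]
  | Int.negSucc n => (shiftHatInv r)^[n + 1]

/-- The function `𝔠(z) = #r⁻¹(r(z₀))` on the solenoid. -/
def cFun {X : Type*} (r : X → X) (z : Solenoid r) : ℝ :=
  Nat.card (r ⁻¹' {r (z.1 0)})

/-- The cocycle `𝔠⁽ⁿ⁾`: `𝔠⁽⁰⁾ = 1`, `𝔠⁽ⁿ⁾ = 𝔠 ⋯ (𝔠∘r̂^{n-1})` for `n ≥ 1`, and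
`𝔠⁽⁻ⁿ⁾ = 1/((𝔠∘r̂⁻¹) ⋯ (𝔠∘r̂⁻ⁿ))` for `n ≥ 1`. -/
def cPow {X : Type*} (r : X → X) : ℤ → Solenoid r → ℝ
  | Int.ofNat n => fun z => ∏ k ∈ Finset.range n, cFun r (shiftHatZ r (k : ℤ) z)
  | Int.negSucc n => fun z =>
      (∏ k ∈ Finset.range (n + 1), cFun r (shiftHatZ r (-(k + 1) : ℤ) z))⁻¹

/-- The set `N_C(x)` of paths starting at `x` converging to the cycle `C = {xc i}`. -/
def NC {X : Type*} [TopologicalSpace X] (r : X → X) {p : ℕ} (xc : ZMod p → X) (x : X) :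
    Set (Solenoid r) :=
  {z | z.1 0 = x ∧ ∃ i : ZMod p, Tendsto (fun n : ℕ => z.1 ((p : ℤ) * (n : ℤ))) atTop (𝓝 (xc i))}

/-- The scaling function `φ̂(x, (z_k)) = ∏_{k=1}^∞ α_{i(ω)+k}⁻¹ m₀(z_k) / √(#r⁻¹(r z_k))`. -/
def scalingFn {X : Type*} (r : X → X) {p : ℕ} (α : ZMod p → ℂ) (ι : Solenoid r → ZMod p)
    (m0 : X → ℂ) (z : Solenoid r) : ℂ :=
  ∏' k : ℕ, (α (ι z + ((k + 1 : ℕ) : ZMod p)))⁻¹ * m0 (z.1 ((k : ℤ) + 1)) /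
    (Real.sqrt (Nat.card (r ⁻¹' {r (z.1 ((k : ℤ) + 1))})) : ℂ)

/-- `r` is averaging w.r.t. `ν`: every function in `L¹(ν)` which is measurable with respect to
`𝔅_∞ = ⋂ₙ r⁻ⁿ(𝔅)` is `ν`-a.e. constant. -/
def Averaging {X : Type*} [MeasurableSpace X] (r : X → X)
    (ν : MeasureTheory.Measure X) : Prop :=
  ∀ g : X → ℝ,
    Measurable[⨅ n : ℕ, MeasurableSpace.comap (r^[n]) inferInstance] g →
    MeasureTheory.Integrable g ν → ∃ c : ℝ, g =ᵐ[ν] fun _ => c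

/-!
Attach to `η ∈ L²(λ_C)` its spectral measure `ν_η`, the law of `z₀` under `|η|² λ_C`. The isometry
`U` intertwines multiplication by `f(z₀)` with multiplication by `f(r(z₀))`, so `ν_η = r_* ν_{Uη}`.

Suppose `0 ≠ ξ ∈ ⋂ Vₙ` and put `ζₙ = U⁻ⁿ ξ ∈ V₀`. Then `ζₙ = fₙ(z₀) φ̂` for a measurable `fₙ`, and
`U ζₙ₊₁ = ζₙ` together with the scaling equation `U φ̂ = m₀(z₀) φ̂` also gives
`ζₙ = fₙ₊₁(r(z₀)) m₀(z₀) φ̂`. For the densities `h = dν_φ̂/dρ` and `gₙ = dν_{ζₙ}/dρ` this means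
`gₙ = |fₙ|² h = |fₙ₊₁ ∘ r|² |m₀|² h`, hence `gₙ · (h ∘ r) = |m₀|² h · (gₙ₊₁ ∘ r)`.

Since `ν_{ζₙ}` is the image of `ν_ξ` under `rⁿ`, the function `gₙ ∘ rⁿ` is the conditional
expectation of `g₀` given `r⁻ⁿ(𝔅)`. Lévy's downward theorem and the averaging property yield
`gₙ → ‖ξ‖²` in measure, a nonzero constant. In the limit, `h > 0` and `h ∘ r = |m₀|² h` almost
everywhere. With `u = |m₀|²`, strong invariance and the quadrature condition say that `ρ` and `u ρ`
both have image `ρ` under `r`, so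
`∫ h (u - 1)² dρ = ∫ (h ∘ r) u dρ - 2 ∫ h ∘ r dρ + ∫ h dρ = 0`.
Thus `|m₀| = 1` almost everywhere, which is excluded.
-/

open scoped NNReal

section DownwardLevy

theorem tendsto_starProjection_iInf {𝕜 E ι : Type*} [RCLike 𝕜] [NormedAddCommGroup E]
    [InnerProductSpace 𝕜 E] [CompleteSpace E] [Preorder ι] (K : ι → Submodule 𝕜 E)
    [∀ i, (K i).HasOrthogonalProjection] [(⨅ i, K i).HasOrthogonalProjection]
    (hK : Antitone K) (x : E) :
    Tendsto (fun i => (K i).starProjection x) atTop (𝓝 ((⨅ i, K i).starProjection x)) := by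
  have hmono : Monotone fun i => (K i)ᗮ := fun i j hij => Submodule.orthogonal_le (hK hij)
  have horth : (⨆ i, (K i)ᗮ).topologicalClosure = (⨅ i, K i)ᗮ := by
    rw [← Submodule.orthogonal_orthogonal_eq_closure, ← Submodule.iInf_orthogonal]
    simp only [Submodule.orthogonal_orthogonal]
  have hlim := Submodule.starProjection_tendsto_closure_iSup (fun i => (K i)ᗮ) hmono x
  simp only [horth, Submodule.starProjection_orthogonal_val] at hlim
  simpa using tendsto_const_nhds (x := x) |>.sub hlim

variable {X E : Type*} {mX : MeasurableSpace X} {μ : Measure X} {m : ℕ → MeasurableSpace X}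

theorem stronglyMeasurable_iInf [TopologicalSpace E] [TopologicalSpace.PseudoMetrizableSpace E]
    {κ : Type*} [Nonempty κ] {m : κ → MeasurableSpace X} {f : X → E}
    (hf : ∀ i, StronglyMeasurable[m i] f) : StronglyMeasurable[⨅ i, m i] f := by
  borelize E
  refine (@stronglyMeasurable_iff_measurable_separable X E f (⨅ i, m i) _ _ _ _).2 ⟨?_, ?_⟩
  · exact fun s hs => MeasurableSpace.measurableSet_iInf.2 fun i => (hf i).measurable hs
  · exact (hf (Classical.arbitrary κ)).isSeparable_range

theorem aestronglyMeasurable_iInf [TopologicalSpace E]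
    [TopologicalSpace.IsCompletelyMetrizableSpace E] (hm : Antitone m) {f : X → E}
    (hf : ∀ n, AEStronglyMeasurable[m n] f μ) : AEStronglyMeasurable[⨅ n, m n] f μ := by
  choose g hg hfg using hf
  rcases isEmpty_or_nonempty X with _ | ⟨⟨x₀⟩⟩
  · exact ⟨f, .of_subsingleton_dom, .rfl⟩
  have : Nonempty E := ⟨f x₀⟩
  refine ⟨fun x => limUnder atTop fun n => g n x, ?_, ?_⟩
  · refine stronglyMeasurable_iInf fun N => ?_
    have htail : (fun x => limUnder atTop fun n => g n x) =
        fun x => limUnder atTop fun n => g (n + N) x := by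
      funext x
      conv_lhs => rw [limUnder, ← map_add_atTop_eq_nat N, Filter.map_map]
      rfl
    rw [htail]
    exact @StronglyMeasurable.limUnder ℕ X E (m N) _ _ _ _ _ _ _ fun n =>
      (hg (n + N)).mono (hm (Nat.le_add_left N n))
  · filter_upwards [ae_all_iff.2 hfg] with x hx
    exact (tendsto_const_nhds.congr hx).limUnder_eq.symm

variable [NormedAddCommGroup E] [InnerProductSpace ℝ E] [CompleteSpace E]

theorem lpMeas_iInf {p : ℝ≥0∞} (hm : Antitone m) :
    lpMeas E ℝ (⨅ n, m n) p μ = ⨅ n, lpMeas E ℝ (m n) p μ := by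
  ext f
  simp only [Submodule.mem_iInf, mem_lpMeas_iff_aestronglyMeasurable]
  exact ⟨fun hf n => hf.mono (iInf_le m n), aestronglyMeasurable_iInf hm⟩

variable [IsFiniteMeasure μ]

theorem tendsto_eLpNorm_two_condExp_iInf (hm : Antitone m) (hle : ∀ n, m n ≤ mX) {f : X → E}
    (hf : MemLp f 2 μ) :
    Tendsto (fun n => eLpNorm (μ[f | m n] - μ[f | ⨅ n, m n]) 2 μ) atTop (𝓝 0) := by
  have hle' : ⨅ n, m n ≤ mX := (iInf_le m 0).trans (hle 0)
  have : ∀ n, Fact (m n ≤ mX) := fun n => ⟨hle n⟩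
  have : Fact (⨅ n, m n ≤ mX) := ⟨hle'⟩
  have hanti : Antitone fun n => lpMeas E ℝ (m n) 2 μ := fun i j hij g hg =>
    mem_lpMeas_iff_aestronglyMeasurable.2
      ((mem_lpMeas_iff_aestronglyMeasurable.1 hg).mono (hm hij))
  have hproj : Tendsto (fun n => (condExpL2 E ℝ (hle n) (hf.toLp f) : Lp E 2 μ)) atTop
      (𝓝 (condExpL2 E ℝ hle' (hf.toLp f) : Lp E 2 μ)) := by
    have : (⨅ n, lpMeas E ℝ (m n) 2 μ).HasOrthogonalProjection := by
      rw [← lpMeas_iInf hm]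
      infer_instance
    convert! tendsto_starProjection_iInf _ hanti (hf.toLp f) using 2
    simp only [← lpMeas_iInf hm]
    rfl
  rw [Lp.tendsto_Lp_iff_tendsto_eLpNorm'] at hproj
  refine hproj.congr fun n => eLpNorm_congr_ae ?_
  exact (hf.condExpL2_ae_eq_condExp (𝕜 := ℝ) (hle n)).sub (hf.condExpL2_ae_eq_condExp hle')

theorem tendsto_eLpNorm_one_condExp_iInf (hm : Antitone m) (hle : ∀ n, m n ≤ mX) {f : X → E}
    (hf : Integrable f μ) :
    Tendsto (fun n => eLpNorm (μ[f | m n] - μ[f | ⨅ n, m n]) 1 μ) atTop (𝓝 0) := by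
  refine ENNReal.tendsto_nhds_zero.2 fun ε hε => ?_
  have hε3 : ε / 3 ≠ 0 := (ENNReal.div_pos hε.ne' (by simp)).ne'
  obtain ⟨g, hfg, hg⟩ :=
    (memLp_one_iff_integrable.2 hf).exists_simpleFunc_eLpNorm_sub_lt one_ne_top hε3
  have hgi : Integrable g μ := memLp_one_iff_integrable.1 hg
  have happrox (m' : MeasurableSpace X) : eLpNorm (μ[f | m'] - μ[g | m']) 1 μ ≤ ε / 3 :=
    calc eLpNorm (μ[f | m'] - μ[g | m']) 1 μ = eLpNorm (μ[f - ⇑g | m']) 1 μ :=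
          eLpNorm_congr_ae (condExp_sub hf hgi m').symm
      _ ≤ eLpNorm (f - ⇑g) 1 μ := eLpNorm_condExp_le_eLpNorm _ le_rfl
      _ ≤ ε / 3 := hfg.le
  have hL2 := tendsto_eLpNorm_two_condExp_iInf hm hle (g.memLp_of_isFiniteMeasure 2 μ)
  have hL1 : Tendsto (fun n => eLpNorm (μ[g | m n] - μ[g | ⨅ n, m n]) 1 μ) atTop (𝓝 0) := by
    have hbound := ENNReal.Tendsto.mul_const hL2 (b := μ Set.univ ^ (2⁻¹ : ℝ)) (.inr (by simp))
    rw [zero_mul] at hbound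
    refine tendsto_of_tendsto_of_tendsto_of_le_of_le tendsto_const_nhds hbound
      (fun n => zero_le) fun n => ?_
    refine (eLpNorm_le_eLpNorm_mul_rpow_measure_univ one_le_two
      (integrable_condExp.sub integrable_condExp).aestronglyMeasurable).trans_eq ?_
    norm_num
  filter_upwards [ENNReal.tendsto_nhds_zero.1 hL1 (ε / 3) hε3.bot_lt] with n hn
  calc eLpNorm (μ[f | m n] - μ[f | ⨅ n, m n]) 1 μ
      = eLpNorm ((μ[f | m n] - μ[g | m n]) + (μ[g | m n] - μ[g | ⨅ n, m n])
          + (μ[g | ⨅ n, m n] - μ[f | ⨅ n, m n])) 1 μ := by congr 1; abel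
    _ ≤ ε / 3 + ε / 3 + ε / 3 := by
      refine (eLpNorm_add_le (by fun_prop) (by fun_prop) le_rfl).trans (add_le_add
        ((eLpNorm_add_le (by fun_prop) (by fun_prop) le_rfl).trans (add_le_add (happrox _) hn)) ?_)
      rw [eLpNorm_sub_comm]
      exact happrox _
    _ = ε := ENNReal.add_thirds ε

end DownwardLevy
section Densities

variable {X : Type*} [mX : MeasurableSpace X] {r : X → X} {ρ : Measure X}

theorem antitone_comap_iterate (hr : Measurable r) :
    Antitone fun n : ℕ => mX.comap r^[n] := by
  refine antitone_nat_of_succ_le fun n => ?_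
  rw [Function.iterate_succ', ← MeasurableSpace.comap_comp]
  exact MeasurableSpace.comap_mono hr.comap_le

namespace Averaging

theorem condExp_ae_eq_integral [IsProbabilityMeasure ρ] (hav : Averaging r ρ) (hr : Measurable r)
    (f : X → ℝ) : ρ[f | ⨅ n : ℕ, mX.comap r^[n]] =ᵐ[ρ] fun _ => ∫ x, f x ∂ρ := by
  have hle : ⨅ n : ℕ, mX.comap r^[n] ≤ mX := (iInf_le _ 0).trans (hr.iterate 0).comap_le
  obtain ⟨c, hc⟩ := hav _ stronglyMeasurable_condExp.measurable integrable_condExp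
  have hcf : ∫ x, f x ∂ρ = c := by
    rw [← integral_condExp hle, integral_congr_ae hc, integral_const, probReal_univ, one_smul]
  rwa [hcf]

theorem tendstoInMeasure_rnDeriv_map_iterate [IsProbabilityMeasure ρ] (hav : Averaging r ρ)
    (hr : MeasurePreserving r ρ ρ) {ν : Measure X} [IsFiniteMeasure ν] (hν : ν ≪ ρ) :
    TendstoInMeasure ρ (fun n x => ((ν.map r^[n]).rnDeriv ρ x).toReal) atTop
      fun _ => ν.real Set.univ := by
  set D : X → ℝ := fun x => (ν.rnDeriv ρ x).toReal
  set g : ℕ → X → ℝ := fun n x => ((ν.map r^[n]).rnDeriv ρ x).toReal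
  have hgm (n : ℕ) : Measurable (g n) := (Measure.measurable_rnDeriv _ _).ennreal_toReal
  have hcond (n : ℕ) : g n ∘ r^[n] =ᵐ[ρ] ρ[D | mX.comap r^[n]] := by
    have : SigmaFinite (ρ.map r^[n]) := by
      rw [(hr.iterate n).map_eq]
      infer_instance
    have hmap := toReal_rnDeriv_map hν (hr.iterate n).measurable
    rwa [(hr.iterate n).map_eq] at hmap
  have hlim := tendsto_eLpNorm_one_condExp_iInf (μ := ρ) (f := D)
    (antitone_comap_iterate hr.measurable) (fun n => (hr.measurable.iterate n).comap_le)
    Measure.integrable_toReal_rnDeriv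
  refine tendstoInMeasure_of_tendsto_eLpNorm one_ne_zero
    (fun n => (hgm n).aestronglyMeasurable) aestronglyMeasurable_const (hlim.congr fun n => ?_)
  have hconst := hav.condExp_ae_eq_integral hr.measurable D
  rw [Measure.integral_toReal_rnDeriv hν] at hconst
  calc eLpNorm (ρ[D | mX.comap r^[n]] - ρ[D | ⨅ n : ℕ, mX.comap r^[n]]) 1 ρ
      = eLpNorm ((g n - fun _ => ν.real Set.univ) ∘ r^[n]) 1 ρ := by
        refine eLpNorm_congr_ae ?_
        filter_upwards [hcond n, hconst] with x hx hcx
        simp only [Pi.sub_apply, Function.comp_apply, ← hx, hcx]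
    _ = eLpNorm (g n - fun _ => ν.real Set.univ) 1 ρ := eLpNorm_comp_measurePreserving
        ((hgm n).sub measurable_const).aestronglyMeasurable (hr.iterate n)

end Averaging

theorem ae_comp_eq_mul_of_tendstoInMeasure {g : ℕ → X → ℝ} {c : ℝ} (hc : c ≠ 0)
    (hg : TendstoInMeasure ρ g atTop fun _ => c) (hr : Measure.QuasiMeasurePreserving r ρ ρ)
    {h u : X → ℝ} (hgh : ∀ n, ∀ᵐ x ∂ρ, g n x * h (r x) = u x * h x * g (n + 1) (r x)) :
    ∀ᵐ x ∂ρ, h (r x) = u x * h x := by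
  obtain ⟨k, hk, hgk⟩ := hg.exists_seq_tendsto_ae
  obtain ⟨l, hl, hgl⟩ :=
    (hg.comp ((tendsto_add_atTop_nat 1).comp hk.tendsto_atTop)).exists_seq_tendsto_ae
  filter_upwards [hgk, hr.ae hgl, ae_all_iff.2 hgh] with x hx hrx hghx
  have hlim : Tendsto (fun i => g (k (l i)) x * h (r x)) atTop (𝓝 (c * h (r x))) :=
    (hx.comp hl.tendsto_atTop).mul_const _
  have hlim' : Tendsto (fun i => g (k (l i)) x * h (r x)) atTop (𝓝 (u x * h x * c)) :=
    (hrx.const_mul (u x * h x)).congr fun i => (hghx _).symm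
  exact mul_left_cancel₀ hc ((tendsto_nhds_unique hlim hlim').trans (mul_comm _ _))

theorem ae_ne_zero_of_tendstoInMeasure {g : ℕ → X → ℝ} {c : ℝ} (hc : c ≠ 0)
    (hg : TendstoInMeasure ρ g atTop fun _ => c) {h : X → ℝ}
    (hgh : ∀ n, ∀ᵐ x ∂ρ, h x = 0 → g n x = 0) : ∀ᵐ x ∂ρ, h x ≠ 0 := by
  obtain ⟨k, -, hgk⟩ := hg.exists_seq_tendsto_ae
  filter_upwards [hgk, ae_all_iff.2 hgh] with x hx hghx hhx
  simp only [hghx _ hhx] at hx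
  exact hc (tendsto_nhds_unique hx tendsto_const_nhds)

theorem ae_eq_one_of_comp_eq_mul (hr : MeasurePreserving r ρ ρ) {u : X → ℝ≥0} (hu : Measurable u)
    (hur : (ρ.withDensity fun x => u x).map r = ρ) {h : X → ℝ} (hint : Integrable h ρ)
    (hpos : ∀ᵐ x ∂ρ, 0 < h x) (heq : ∀ᵐ x ∂ρ, h (r x) = u x * h x) : ∀ᵐ x ∂ρ, u x = 1 := by
  have hhr : Integrable (fun x => h (r x)) ρ := (hr.integrable_comp hint.1).2 hint
  have hcomp {μ : Measure X} (hμ : MeasurePreserving r μ ρ) :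
      ∫ x, h (r x) ∂μ = ∫ x, h x ∂ρ := by
    rw [← integral_map hμ.measurable.aemeasurable (hμ.map_eq.symm ▸ hint.1), hμ.map_eq]
  have hmap : MeasurePreserving r (ρ.withDensity fun x => u x) ρ := ⟨hr.measurable, hur⟩
  have huhr : Integrable (fun x => u x * h (r x)) ρ :=
    (integrable_withDensity_iff_integrable_smul hu).1 ((hmap.integrable_comp hint.1).2 hint)
  have hintur : ∫ x, u x * h (r x) ∂ρ = ∫ x, h x ∂ρ := by
    rw [← hcomp hmap, integral_withDensity_eq_integral_smul hu]
    rfl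
  have hsq : ∀ᵐ x ∂ρ, h x * ((u x : ℝ) - 1) ^ 2 = u x * h (r x) - 2 * h (r x) + h x := by
    filter_upwards [heq] with x hx
    rw [hx]; ring
  have hsqi : Integrable (fun x => h x * ((u x : ℝ) - 1) ^ 2) ρ :=
    ((huhr.sub (hhr.const_mul 2)).add hint).congr (hsq.mono fun x hx => hx.symm)
  have hzero : ∫ x, h x * ((u x : ℝ) - 1) ^ 2 ∂ρ = 0 := by
    rw [integral_congr_ae hsq, integral_add (by exact huhr.sub (hhr.const_mul 2)) hint,
      integral_sub huhr (hhr.const_mul 2), integral_const_mul, hcomp hr, hintur]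
    ring
  have hnonneg : 0 ≤ᵐ[ρ] fun x => h x * ((u x : ℝ) - 1) ^ 2 :=
    hpos.mono fun x hx => mul_nonneg hx.le (sq_nonneg _)
  filter_upwards [hpos, (integral_eq_zero_iff_of_nonneg_ae hnonneg hsqi).1 hzero] with x hx hx0
  have : (u x : ℝ) - 1 = 0 := by simpa [hx.ne'] using hx0
  exact_mod_cast sub_eq_zero.1 this

theorem ae_eq_one_of_forall_withDensity [IsProbabilityMeasure ρ] (hav : Averaging r ρ)
    (hr : MeasurePreserving r ρ ρ) {u : X → ℝ≥0} (hu : Measurable u)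
    (hur : (ρ.withDensity fun x => u x).map r = ρ) {μ : Measure X} [IsFiniteMeasure μ]
    (hμ : μ ≪ ρ) {ν : ℕ → Measure X} [IsFiniteMeasure (ν 0)] (hν0 : ν 0 ≠ 0)
    (hmap : ∀ n, (ν n).map r = ν (n + 1)) {w : ℕ → X → ℝ≥0} (hw : ∀ n, Measurable (w n))
    (hνw : ∀ n, ν n = μ.withDensity fun x => w n x)
    (hνu : ∀ n, ν n = μ.withDensity fun x => (w (n + 1) (r x) * u x : ℝ≥0)) :
    ∀ᵐ x ∂ρ, u x = 1 := by
  set h : X → ℝ := fun x => (μ.rnDeriv ρ x).toReal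
  have hderiv {v : X → ℝ≥0} (hv : Measurable v) :
      ∀ᵐ x ∂ρ, ((μ.withDensity fun x => v x).rnDeriv ρ x).toReal = v x * h x := by
    filter_upwards [Measure.rnDeriv_withDensity_left (μ := μ) (ν := ρ)
      hv.coe_nnreal_ennreal.aemeasurable (.of_forall fun x => coe_ne_top)] with x hx
    rw [hx, toReal_mul, coe_toReal]
  have hiter (n : ℕ) : (ν 0).map r^[n] = ν n := by
    induction n with
    | zero => simp
    | succ n ih =>
      rw [Function.iterate_succ', ← Measure.map_map hr.measurable (hr.measurable.iterate n), ih,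
        hmap]
  have hlim : TendstoInMeasure ρ (fun n x => ((ν n).rnDeriv ρ x).toReal) atTop
      fun _ => (ν 0).real Set.univ := by
    have hν : ν 0 ≪ ρ := by
      rw [hνw 0]
      exact (withDensity_absolutelyContinuous _ _).trans hμ
    simpa only [hiter] using hav.tendstoInMeasure_rnDeriv_map_iterate hr hν
  have hc : (ν 0).real Set.univ ≠ 0 := by simpa [Measure.real, toReal_eq_zero_iff] using hν0
  have hw' (n : ℕ) : ∀ᵐ x ∂ρ, ((ν n).rnDeriv ρ x).toReal = w n x * h x := hνw n ▸ hderiv (hw n)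
  have hwu (n : ℕ) : ∀ᵐ x ∂ρ, ((ν n).rnDeriv ρ x).toReal = (w (n + 1) (r x) * u x) * h x := by
    rw [hνu n]
    exact_mod_cast hderiv (((hw (n + 1)).comp hr.measurable).mul hu)
  have hne : ∀ᵐ x ∂ρ, h x ≠ 0 := ae_ne_zero_of_tendstoInMeasure hc hlim fun n =>
    (hw' n).mono fun x hx hx0 => by rw [hx, hx0, mul_zero]
  refine ae_eq_one_of_comp_eq_mul hr hu hur Measure.integrable_toReal_rnDeriv
    (hne.mono fun x hx => toReal_nonneg.lt_of_ne' hx) ?_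
  refine ae_comp_eq_mul_of_tendstoInMeasure (h := h) hc hlim hr.quasiMeasurePreserving fun n => ?_
  filter_upwards [hwu n, hr.quasiMeasurePreserving.ae (hw' (n + 1))] with x hx hrx
  rw [hx, hrx]
  ring

end Densities

section StronglyInvariant

/-- `ρ` is strongly invariant under `r`: the integral of a bounded function agrees with that of its
averages over the fibres of `r`. -/
def StronglyInvariant {X : Type*} [MeasurableSpace X] (r : X → X) (ρ : Measure X) : Prop :=
  ∀ f : X → ℝ, Measurable f → (∃ M : ℝ, ∀ x, |f x| ≤ M) →
    ∫ x, f x ∂ρ = ∫ x, (Nat.card (r ⁻¹' {x}) : ℝ)⁻¹ * ∑' y : r ⁻¹' {x}, f y.1 ∂ρ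

theorem tsum_fiber_indicator {X M : Type*} [AddCommMonoid M] [TopologicalSpace M]
    (r : X → X) (A : Set X) (f : X → M) (x : X) :
    ∑' y : r ⁻¹' {x}, (r ⁻¹' A).indicator f y.1 =
      A.indicator (fun x => ∑' y : r ⁻¹' {x}, f y.1) x := by
  have hr (y : r ⁻¹' {x}) : r y.1 = x := y.2
  by_cases hx : x ∈ A <;> simp [Set.indicator, hr, hx]

variable {X : Type*} [MeasurableSpace X] {r : X → X} {ρ : Measure X}

theorem StronglyInvariant.map_withDensity [IsFiniteMeasure ρ] (hρ : StronglyInvariant r ρ)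
    (hr : Measurable r) {w : X → ℝ≥0} (hw : Measurable w) (hwb : ∃ M : ℝ, ∀ x, (w x : ℝ) ≤ M)
    (hmean : ∀ x, (Nat.card (r ⁻¹' {x}) : ℝ)⁻¹ * ∑' y : r ⁻¹' {x}, (w y.1 : ℝ) = 1) :
    (ρ.withDensity fun x => w x).map r = ρ := by
  obtain ⟨M, hM⟩ := hwb
  have hwℝ : Measurable fun x => (w x : ℝ) := hw.coe_nnreal_real
  have hwM (x : X) : ‖(w x : ℝ)‖ ≤ M := by simpa using hM x
  have hint : Integrable (fun x => (w x : ℝ)) ρ :=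
    Integrable.of_bound hwℝ.aestronglyMeasurable M (Eventually.of_forall hwM)
  ext A hA
  have hbound : ∀ x, |(r ⁻¹' A).indicator (fun y => (w y : ℝ)) x| ≤ M := fun x =>
    (norm_indicator_le_norm_self (fun y => (w y : ℝ)) x).trans (hwM x)
  have havg : ∫ x in r ⁻¹' A, (w x : ℝ) ∂ρ = ρ.real A := by
    rw [← integral_indicator (hr hA), hρ _ (hwℝ.indicator (hr hA)) ⟨M, hbound⟩,
      ← integral_indicator_one hA]
    refine integral_congr_ae (Eventually.of_forall fun x => ?_)
    by_cases hx : x ∈ A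
    · simpa only [tsum_fiber_indicator, Set.indicator_of_mem hx, Pi.one_apply] using hmean x
    · simp only [tsum_fiber_indicator, Set.indicator_of_notMem hx, mul_zero]
  calc (ρ.withDensity fun x => w x).map r A = ∫⁻ x in r ⁻¹' A, w x ∂ρ := by
        rw [Measure.map_apply hr hA, withDensity_apply _ (hr hA)]
    _ = ENNReal.ofReal (∫ x in r ⁻¹' A, (w x : ℝ) ∂ρ) := by
        rw [ofReal_integral_eq_lintegral_ofReal hint.integrableOn
          (Eventually.of_forall fun x => (w x).coe_nonneg)]
        simp only [ENNReal.ofReal_coe_nnreal]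
    _ = ρ A := by rw [havg, ofReal_measureReal]

theorem StronglyInvariant.measurePreserving [IsFiniteMeasure ρ] (hρ : StronglyInvariant r ρ)
    (hr : Measurable r) (hcard : ∀ x, Nat.card (r ⁻¹' {x}) ≠ 0) : MeasurePreserving r ρ ρ := by
  refine ⟨hr, ?_⟩
  have hmean (x : X) : (Nat.card (r ⁻¹' {x}) : ℝ)⁻¹ * ∑' _ : r ⁻¹' {x}, ((1 : ℝ≥0) : ℝ) = 1 := by
    simpa using inv_mul_cancel₀ (Nat.cast_ne_zero.2 (hcard x))
  simpa using hρ.map_withDensity hr (w := 1) measurable_const ⟨1, by simp⟩ hmean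

theorem integral_eq_zero_of_forall_subset_support {E : Type*} [NormedAddCommGroup E]
    [NormedSpace ℝ E] {G : X → E}
    (h : ∀ A, MeasurableSet A → A ⊆ Function.support G → ρ A = 0) : ∫ x, G x ∂ρ = 0 := by
  by_cases hG : AEStronglyMeasurable G ρ
  · obtain ⟨A, hAG, hA, hAe⟩ := hG.nullMeasurableSet_support.exists_measurable_subset_ae_eq
    refine integral_eq_zero_of_ae ?_
    simpa [EventuallyEq, ae_iff, Function.support] using (measure_congr hAe).symm.trans (h A hA hAG)
  · exact integral_non_aestronglyMeasurable hG

/-- The image `r '' B` need not be measurable, so its nullity is expressed by that of its measurable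
subsets. -/
theorem StronglyInvariant.measure_eq_zero_of_image [IsFiniteMeasure ρ] (hρ : StronglyInvariant r ρ)
    {B : Set X} (hB : MeasurableSet B) (h : ∀ A, MeasurableSet A → A ⊆ r '' B → ρ A = 0) :
    ρ B = 0 := by
  have hsupp : (Function.support fun x => (Nat.card (r ⁻¹' {x}) : ℝ)⁻¹ *
      ∑' y : r ⁻¹' {x}, B.indicator (1 : X → ℝ) y.1) ⊆ r '' B := by
    intro x hx
    obtain ⟨y, hy⟩ : ∃ y : r ⁻¹' {x}, B.indicator (1 : X → ℝ) y.1 ≠ 0 := by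
      contrapose! hx
      simp [hx]
    exact ⟨y.1, Set.mem_of_indicator_ne_zero hy, y.2⟩
  have hint := hρ (B.indicator 1) (measurable_one.indicator hB)
    ⟨1, fun x => (norm_indicator_le_norm_self (1 : X → ℝ) x).trans norm_one.le⟩
  rw [integral_indicator_one hB,
    integral_eq_zero_of_forall_subset_support fun A hA hAs => h A hA (hAs.trans hsupp)] at hint
  exact (measureReal_eq_zero_iff).1 hint

end StronglyInvariant

section FiberwiseCounting

/-- `lam` is the `ρ`-integral of the counting measures on the sets `N x`; for `N = NC r xc` this is
the measure `λ_C`. -/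
def IsFiberwiseCounting {X Ω : Type*} [MeasurableSpace X] [MeasurableSpace Ω] (N : X → Set Ω)
    (ρ : Measure X) (lam : Measure Ω) : Prop :=
  ∀ F : Ω → ℝ≥0∞, Measurable F → ∫⁻ z, F z ∂lam = ∫⁻ x, ∑' ω : N x, F ω.1 ∂ρ

variable {X Ω : Type*} [MeasurableSpace X] [MeasurableSpace Ω] {N : X → Set Ω} {ρ : Measure X}
  {lam : Measure Ω}

theorem IsFiberwiseCounting.measure_eq_zero_iff (hlam : IsFiberwiseCounting N ρ lam) {E : Set Ω}
    (hE : MeasurableSet E) :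
    lam E = 0 ↔ ∀ B, MeasurableSet B → (∀ x ∈ B, (N x ∩ E).Nonempty) → ρ B = 0 := by
  have hlamE := hlam (E.indicator 1) (measurable_one.indicator hE)
  rw [lintegral_indicator_one hE] at hlamE
  rw [hlamE]
  refine ⟨fun h B hB hBE => le_antisymm ?_ zero_le, fun h => ?_⟩
  · rw [← h, ← lintegral_indicator_one hB]
    refine lintegral_mono fun x => ?_
    by_cases hx : x ∈ B
    · obtain ⟨ω, hω, hωE⟩ := hBE x hx
      refine le_trans ?_ (ENNReal.le_tsum (⟨ω, hω⟩ : N x))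
      simp [hx, hωE]
    · simp [hx]
  · obtain ⟨g, hg, hgle, hgeq⟩ := exists_measurable_le_lintegral_eq ρ
      fun x => ∑' ω : N x, E.indicator (1 : Ω → ℝ≥0∞) ω.1
    rw [hgeq, lintegral_eq_zero_iff hg]
    refine h {x | g x ≠ 0} (hg (measurableSet_singleton 0)).compl fun x hx => ?_
    by_contra hempty
    have hzero (ω : N x) : E.indicator (1 : Ω → ℝ≥0∞) ω.1 = 0 :=
      Set.indicator_of_notMem (fun hωE => hempty ⟨ω.1, ω.2, hωE⟩) _
    exact hx (le_antisymm ((hgle x).trans (by simp [hzero])) zero_le)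

theorem IsFiberwiseCounting.quasiMeasurePreserving (hlam : IsFiberwiseCounting N ρ lam)
    [IsFiniteMeasure ρ] {r : X → X} (hρ : StronglyInvariant r ρ) {T : Ω → Ω} (hT : Measurable T)
    (hTN : ∀ x, Set.MapsTo T (N x) (N (r x))) : Measure.QuasiMeasurePreserving T lam lam := by
  refine ⟨hT, Measure.AbsolutelyContinuous.mk fun E hE hE0 => ?_⟩
  rw [Measure.map_apply hT hE, hlam.measure_eq_zero_iff (hT hE)]
  refine fun B hB hBE => hρ.measure_eq_zero_of_image hB fun A hA hAB =>
    (hlam.measure_eq_zero_iff hE).1 hE0 A hA fun x hx => ?_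
  obtain ⟨y, hy, rfl⟩ := hAB hx
  obtain ⟨ω, hω, hωE⟩ := hBE y hy
  exact ⟨T ω, hTN y hω, hωE⟩

theorem IsFiberwiseCounting.ae_mem (hlam : IsFiberwiseCounting N ρ lam) {E : Set Ω}
    (hE : MeasurableSet E) (h : ∀ x, N x ⊆ E) : ∀ᵐ z ∂lam, z ∈ E := by
  refine (hlam.measure_eq_zero_iff hE.compl).2 fun B _ hBE => ?_
  suffices B = ∅ by simp [this]
  refine Set.eq_empty_of_forall_notMem fun x hx => ?_
  obtain ⟨ω, hω, hωE⟩ := hBE x hx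
  exact hωE (h x hω)

theorem IsFiberwiseCounting.map_absolutelyContinuous (hlam : IsFiberwiseCounting N ρ lam)
    {q : Ω → X} (hq : Measurable q) (hqN : ∀ x, ∀ ω ∈ N x, q ω = x) : lam.map q ≪ ρ := by
  refine Measure.AbsolutelyContinuous.mk fun A hA hA0 => ?_
  rw [Measure.map_apply hq hA, hlam.measure_eq_zero_iff (hq hA)]
  refine fun B _ hBA => measure_mono_null (fun x hx => ?_) hA0
  obtain ⟨ω, hω, hωA⟩ := hBA x hx
  exact hqN x ω hω ▸ hωA

end FiberwiseCounting

section Paths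

theorem apply_coe {X : Type*} {r : X → X} (z : Solenoid r) (n : ℤ) : r (z.1 n) = z.1 (n - 1) := by
  simpa using z.2 (n - 1)

theorem shiftHat_coe_zero {X : Type*} {r : X → X} (z : Solenoid r) :
    (shiftHat r z).1 0 = r (z.1 0) := by
  simp [shiftHat, apply_coe]

theorem iterate_coe_add {X : Type*} {r : X → X} (z : Solenoid r) (k : ℤ) (n : ℕ) :
    r^[n] (z.1 (k + n)) = z.1 k := by
  induction n with
  | zero => simp
  | succ n ih => rw [Function.iterate_succ_apply, Nat.cast_succ, ← add_assoc, z.2, ih]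

theorem measurable_coe_apply {X : Type*} [MeasurableSpace X] (r : X → X) (k : ℤ) :
    Measurable fun z : Solenoid r => z.1 k :=
  (measurable_pi_apply k).comp measurable_subtype_coe

theorem measurable_shiftHat {X : Type*} [MeasurableSpace X] (r : X → X) :
    Measurable (shiftHat r) :=
  (measurable_pi_lambda _ fun n => measurable_coe_apply r (n - 1)).subtype_mk

variable {X : Type*} [TopologicalSpace X] {r : X → X} {p : ℕ} {xc : ZMod p → X}

theorem tendsto_coe_mul_sub_natCast (hcyc : ∀ i, r (xc (i + 1)) = xc i)
    (hrc : ∀ i, ContinuousAt r (xc i)) {z : Solenoid r} {i : ZMod p}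
    (hz : Tendsto (fun n : ℕ => z.1 (p * n)) atTop (𝓝 (xc i))) (j : ℕ) :
    Tendsto (fun n : ℕ => z.1 (p * n - j)) atTop (𝓝 (xc (i - j))) := by
  induction j with
  | zero => simpa using hz
  | succ j ih =>
    have hstep := (hrc (i - j)).tendsto.comp ih
    have hxc : r (xc (i - j)) = xc (i - j - 1) := by simpa using hcyc (i - j - 1)
    simpa only [hxc, Function.comp_def, apply_coe, sub_sub, Nat.cast_succ] using hstep

theorem tendsto_coe_mul_add_intCast [NeZero p] (hcyc : ∀ i, r (xc (i + 1)) = xc i)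
    (hrc : ∀ i, ContinuousAt r (xc i)) {z : Solenoid r} {i : ZMod p}
    (hz : Tendsto (fun n : ℕ => z.1 (p * n)) atTop (𝓝 (xc i))) (j : ℤ) :
    Tendsto (fun n : ℕ => z.1 (p * n + j)) atTop (𝓝 (xc (i + j))) := by
  obtain ⟨m, hm⟩ : ∃ m : ℕ, j ≤ p * m :=
    ⟨j.toNat, j.self_le_toNat.trans (le_mul_of_one_le_left (by positivity)
      (by exact_mod_cast NeZero.one_le))⟩
  obtain ⟨k, hk⟩ := Int.eq_ofNat_of_zero_le (sub_nonneg.2 hm)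
  have hj : j = p * m - k := by rw [← hk]; ring
  have hlim : i + (j : ZMod p) = i - k := by simp [hj, sub_eq_add_neg]
  rw [hlim]
  refine ((tendsto_coe_mul_sub_natCast hcyc hrc hz k).comp (tendsto_add_atTop_nat m)).congr
    fun n => ?_
  rw [Function.comp_apply, hj, Nat.cast_add, mul_add, add_sub_assoc]

theorem tendsto_shiftHat (hcyc : ∀ i, r (xc (i + 1)) = xc i)
    (hrc : ∀ i, ContinuousAt r (xc i)) {z : Solenoid r} {i : ZMod p}
    (hz : Tendsto (fun n : ℕ => z.1 (p * n)) atTop (𝓝 (xc i))) :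
    Tendsto (fun n : ℕ => (shiftHat r z).1 (p * n)) atTop (𝓝 (xc (i - 1))) := by
  simpa [shiftHat] using tendsto_coe_mul_sub_natCast hcyc hrc hz 1

theorem shiftHat_mem_NC (hcyc : ∀ i, r (xc (i + 1)) = xc i) (hrc : ∀ i, ContinuousAt r (xc i))
    {z : Solenoid r} {x : X} (hz : z ∈ NC r xc x) : shiftHat r z ∈ NC r xc (r x) := by
  obtain ⟨rfl, i, hi⟩ := hz
  exact ⟨shiftHat_coe_zero z, i - 1, tendsto_shiftHat hcyc hrc hi⟩

theorem limitIndex_shiftHat [T2Space X] (hxc : Function.Injective xc)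
    (hcyc : ∀ i, r (xc (i + 1)) = xc i) (hrc : ∀ i, ContinuousAt r (xc i))
    {ι : Solenoid r → ZMod p}
    (hι : ∀ x, ∀ ω ∈ NC r xc x, Tendsto (fun n : ℕ => ω.1 (p * n)) atTop (𝓝 (xc (ι ω))))
    {z : Solenoid r} {x : X} (hz : z ∈ NC r xc x) : ι (shiftHat r z) = ι z - 1 :=
  hxc (tendsto_nhds_unique (hι _ _ (shiftHat_mem_NC hcyc hrc hz))
    (tendsto_shiftHat hcyc hrc (hι x z hz)))

end Paths

section RepellingPoints

/-- `x` is a repelling fixed point of `f`, in the metric sense: near `x` the map `f` expands the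
distance to `x` by at least a fixed factor `c⁻¹ > 1`. -/
def IsRepellingAt {X : Type*} [PseudoMetricSpace X] (f : X → X) (x : X) : Prop :=
  ∃ c δ : ℝ, 0 < c ∧ c < 1 ∧ 0 < δ ∧
    ∀ y, 0 < dist y x → dist y x < δ → c⁻¹ * dist y x < dist (f y) x

variable {X : Type*} [PseudoMetricSpace X] {f : X → X} {x : X} {e : ℕ → X}

theorem IsRepellingAt.exists_dist_le_geometric (hf : IsRepellingAt f x)
    (he : ∀ n, f (e (n + 1)) = e n) (hlim : Tendsto e atTop (𝓝 x)) :
    ∃ A c : ℝ, ∃ N : ℕ, 0 < A ∧ 0 < c ∧ c < 1 ∧ ∀ n, dist (e (n + N)) x ≤ A * c ^ (n + 1) := by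
  obtain ⟨c, δ, hc0, hc1, hδ, hexp⟩ := hf
  obtain ⟨N, hN⟩ := eventually_atTop.1 (hlim.eventually (Metric.ball_mem_nhds x hδ))
  have hcontract (n : ℕ) : dist (e (n + 1 + N)) x ≤ c * dist (e (n + N)) x := by
    rcases (dist_nonneg (x := e (n + 1 + N)) (y := x)).eq_or_lt with h | h
    · rw [← h]
      positivity
    · have hlt := hexp _ h (hN _ (Nat.le_add_left _ _))
      rw [add_right_comm, he, inv_mul_lt_iff₀ hc0] at hlt
      rw [add_right_comm]
      exact hlt.le
  refine ⟨(dist (e N) x + 1) / c, c, N, by positivity, hc0, hc1, fun n => ?_⟩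
  calc dist (e (n + N)) x ≤ c ^ n * dist (e (0 + N)) x :=
        le_geom (u := fun n => dist (e (n + N)) x) hc0.le n fun k _ => hcontract k
    _ ≤ c ^ n * (dist (e N) x + 1) := by
        rw [zero_add]
        gcongr
        exact le_add_of_nonneg_right zero_le_one
    _ = (dist (e N) x + 1) / c * c ^ (n + 1) := by
        rw [pow_succ]
        field_simp

theorem IsRepellingAt.summable_norm_of_le_modulus {E : Type*} [SeminormedAddCommGroup E] {g : X → E}
    {β : ℝ → ℝ} (hβmono : MonotoneOn β (Set.Ici 0))
    (hβsum : ∀ A : ℝ, 0 < A → ∀ c : ℝ, 0 < c → c < 1 → Summable fun k : ℕ => β (A * c ^ (k + 1)))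
    (hf : IsRepellingAt f x) (he : ∀ n, f (e (n + 1)) = e n) (hlim : Tendsto e atTop (𝓝 x))
    (hg : ∀ᶠ y in 𝓝 x, ‖g y‖ ≤ β (dist y x)) : Summable fun n => ‖g (e n)‖ := by
  obtain ⟨A, c, N, hA, hc0, hc1, hdist⟩ := hf.exists_dist_le_geometric he hlim
  refine (summable_nat_add_iff N).1
    (Summable.of_norm_bounded_eventually_nat (hβsum A hA c hc0 hc1) ?_)
  filter_upwards [((tendsto_add_atTop_iff_nat N).2 hlim).eventually hg] with n hn
  rw [norm_norm]
  exact hn.trans (hβmono dist_nonneg (Set.mem_Ici.2 (by positivity)) (hdist n))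

end RepellingPoints

section ScalingFunction

/-- The factor `a⁻¹ m₀(x) / √(#r⁻¹(r(x)))` of the infinite product defining the scaling function. -/
def normalizedFilter {X : Type*} (r : X → X) (m0 : X → ℂ) (a : ℂ) (x : X) : ℂ :=
  a⁻¹ * m0 x / (Real.sqrt (Nat.card (r ⁻¹' {r x})) : ℂ)

theorem one_le_sqrt_natCast {n : ℕ} (hn : n ≠ 0) : 1 ≤ Real.sqrt n := by
  rw [Real.one_le_sqrt, Nat.one_le_cast]
  exact Nat.one_le_iff_ne_zero.2 hn

theorem summable_of_forall_residue {f : ℕ → ℝ} (p : ℕ) [NeZero p] (hf : ∀ n, 0 ≤ f n)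
    (h : ∀ s : Fin p, Summable fun n : ℕ => f (n * p + s)) : Summable f := by
  rw [← (Nat.divModEquiv p).symm.summable_iff, ← (Equiv.prodComm (Fin p) ℕ).summable_iff]
  exact (summable_prod_of_nonneg fun _ => hf _).2 ⟨h, Summable.of_finite⟩

theorem eventually_norm_normalizedFilter_sub_one_le {X : Type*} [TopologicalSpace X] {r : X → X}
    {m0 : X → ℂ} {a : ℂ} {x : X} {b : X → ℝ} (ha : ‖a‖ = 1) (hr : ContinuousAt r x)
    (hcard : Nat.card (r ⁻¹' {r x}) ≠ 0)
    (hcc : ∀ᶠ y in 𝓝 (r x), Nat.card (r ⁻¹' {y}) = Nat.card (r ⁻¹' {r x}))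
    (hb : ∀ᶠ y in 𝓝 x, ‖m0 y - m0 x‖ ≤ b y)
    (hlp : m0 x = a * (Real.sqrt (Nat.card (r ⁻¹' {r x})) : ℂ)) :
    ∀ᶠ y in 𝓝 x, ‖normalizedFilter r m0 a y - 1‖ ≤ b y := by
  set Q : ℝ := Real.sqrt (Nat.card (r ⁻¹' {r x})) with hQ
  have hQ1 : 1 ≤ Q := one_le_sqrt_natCast hcard
  have hQ0 : (Q : ℂ) ≠ 0 := Complex.ofReal_ne_zero.2 (by linarith)
  have ha0 : a ≠ 0 := norm_ne_zero_iff.1 (ha ▸ one_ne_zero)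
  filter_upwards [hb, hr.eventually hcc] with y hy hcy
  have hdiff : normalizedFilter r m0 a y - 1 = a⁻¹ * (m0 y - m0 x) / (Q : ℂ) := by
    rw [normalizedFilter, hcy, ← hQ, hlp]
    field_simp
  rw [hdiff, norm_div, norm_mul, norm_inv, ha, inv_one, one_mul, Complex.norm_real,
    Real.norm_of_nonneg (zero_le_one.trans hQ1)]
  exact (div_le_self (norm_nonneg _) hQ1).trans hy

theorem multipliable_normalizedFilter {X : Type*} [PseudoMetricSpace X] {r : X → X} {p : ℕ}
    [NeZero p] {xc : ZMod p → X} {α : ZMod p → ℂ} {m0 : X → ℂ} {β : ℝ → ℝ} {z : Solenoid r}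
    (hcard : ∀ x, Nat.card (r ⁻¹' {x}) ≠ 0)
    (hcyc : ∀ i, r (xc (i + 1)) = xc i) (hα : ∀ i, ‖α i‖ = 1)
    (hrep : ∀ i, IsRepellingAt r^[p] (xc i)) (hrc : ∀ i, ContinuousAt r (xc i))
    (hcc : ∀ i, ∀ᶠ y in 𝓝 (xc i), Nat.card (r ⁻¹' {y}) = Nat.card (r ⁻¹' {xc i}))
    (hβmono : MonotoneOn β (Set.Ici 0))
    (hβsum : ∀ A : ℝ, 0 < A → ∀ c : ℝ, 0 < c → c < 1 → Summable fun k : ℕ => β (A * c ^ (k + 1)))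
    (hβlip : ∀ i, ∀ᶠ y in 𝓝 (xc i), ‖m0 y - m0 (xc i)‖ ≤ β (dist y (xc i)))
    (hlp : ∀ i, m0 (xc i) = α i * (Real.sqrt (Nat.card (r ⁻¹' {r (xc i)})) : ℂ))
    {i : ZMod p} (hz : Tendsto (fun n : ℕ => z.1 (p * n)) atTop (𝓝 (xc i))) :
    Multipliable fun k : ℕ =>
      normalizedFilter r m0 (α (i + (k + 1 : ℕ))) (z.1 ((k : ℤ) + 1)) := by
  suffices hsum : Summable fun k : ℕ =>
      ‖normalizedFilter r m0 (α (i + (k + 1 : ℕ))) (z.1 ((k : ℤ) + 1)) - 1‖ by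
    simpa using multipliable_one_add_of_summable hsum
  refine summable_of_forall_residue p (fun _ => norm_nonneg _) fun s => ?_
  set q : ZMod p := i + ((s + 1 : ℤ) : ZMod p) with hq
  have hrq : r (xc q) = xc (q - 1) := by simpa using hcyc (q - 1)
  have hbound : ∀ᶠ y in 𝓝 (xc q), ‖normalizedFilter r m0 (α q) y - 1‖ ≤ β (dist y (xc q)) :=
    eventually_norm_normalizedFilter_sub_one_le (hα q) (hrc q) (hcard _)
      (hrq ▸ hcc (q - 1)) (hβlip q) (hlp q)
  have horbit (n : ℕ) : r^[p] (z.1 (p * (n + 1 : ℕ) + (s + 1))) = z.1 (p * n + (s + 1)) := by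
    rw [Nat.cast_succ, mul_add_one, add_right_comm, iterate_coe_add]
  refine ((hrep q).summable_norm_of_le_modulus hβmono hβsum horbit
    (tendsto_coe_mul_add_intCast hcyc hrc hz (s + 1)) hbound).congr fun n => ?_
  have hidx : i + ((n * p + s + 1 : ℕ) : ZMod p) = q := by simp [hq]
  have hcoe : ((n * p + s : ℕ) : ℤ) + 1 = p * n + (s + 1) := by push_cast; ring
  rw [hidx, hcoe]

theorem scalingFn_shiftHat {X : Type*} {r : X → X} {p : ℕ} {α : ZMod p → ℂ} {m0 : X → ℂ}
    {z : Solenoid r} {ι : Solenoid r → ZMod p}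
    (hmul : Multipliable fun k : ℕ =>
      normalizedFilter r m0 (α (ι z + (k + 1 : ℕ))) (z.1 ((k : ℤ) + 1)))
    (hι : ι (shiftHat r z) = ι z - 1) :
    scalingFn r α ι m0 (shiftHat r z) =
      normalizedFilter r m0 (α (ι z)) (z.1 0) * scalingFn r α ι m0 z := by
  have hshift (k : ℕ) : normalizedFilter r m0 (α (ι (shiftHat r z) + (k + 1 : ℕ)))
      ((shiftHat r z).1 ((k : ℤ) + 1)) = normalizedFilter r m0 (α (ι z + k)) (z.1 k) := by
    rw [hι]
    simp [shiftHat]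
  calc scalingFn r α ι m0 (shiftHat r z)
      = ∏' k : ℕ, normalizedFilter r m0 (α (ι z + k)) (z.1 k) := tprod_congr hshift
    _ = normalizedFilter r m0 (α (ι z)) (z.1 0) * scalingFn r α ι m0 z := by
        rw [tprod_eq_zero_mul' (by simpa using hmul)]
        simp [scalingFn, normalizedFilter]

end ScalingFunction

section SpectralMeasure

variable {X Ω : Type*} [MeasurableSpace X] [MeasurableSpace Ω] {lam : Measure Ω}

theorem lintegral_enorm_sq_eq {E : Type*} [NormedAddCommGroup E] (η : Lp E 2 lam) :
    ∫⁻ z, ‖η z‖ₑ ^ 2 ∂lam = ‖η‖ₑ ^ 2 := by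
  rw [Lp.enorm_def]
  simpa using (eLpNorm_nnreal_pow_eq_lintegral (f := η) (μ := lam) (p := 2) two_ne_zero).symm

/-- The spectral measure at the vector `η` of the representation of functions on `X` by
multiplication operators `ξ ↦ (f ∘ q) ξ` on `L²(lam)`: the law of `q` under `‖η‖² lam`. -/
def spectralMeasure {E : Type*} [NormedAddCommGroup E] (q : Ω → X) (η : Lp E 2 lam) : Measure X :=
  (lam.withDensity fun z => ‖η z‖ₑ ^ 2).map q

section NormedGroup

variable {E : Type*} [NormedAddCommGroup E] {q : Ω → X}

theorem spectralMeasure_apply (hq : Measurable q) (η : Lp E 2 lam) {A : Set X}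
    (hA : MeasurableSet A) : spectralMeasure q η A = ∫⁻ z in q ⁻¹' A, ‖η z‖ₑ ^ 2 ∂lam := by
  rw [spectralMeasure, Measure.map_apply hq hA, withDensity_apply _ (hq hA)]

theorem spectralMeasure_univ (hq : Measurable q) (η : Lp E 2 lam) :
    spectralMeasure q η Set.univ = ‖η‖ₑ ^ 2 := by
  rw [spectralMeasure_apply hq η MeasurableSet.univ, Set.preimage_univ, Measure.restrict_univ,
    lintegral_enorm_sq_eq]

theorem isFiniteMeasure_spectralMeasure (hq : Measurable q) (η : Lp E 2 lam) :
    IsFiniteMeasure (spectralMeasure q η) :=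
  ⟨by simpa only [spectralMeasure_univ hq] using ENNReal.pow_lt_top enorm_lt_top⟩

theorem spectralMeasure_ne_zero (hq : Measurable q) {η : Lp E 2 lam} (hη : η ≠ 0) :
    spectralMeasure q η ≠ 0 := by
  rw [← Measure.measure_univ_ne_zero, spectralMeasure_univ hq]
  exact pow_ne_zero 2 (enorm_ne_zero.2 hη)

theorem spectralMeasure_absolutelyContinuous (hq : Measurable q) {ρ : Measure X}
    (h : lam.map q ≪ ρ) (η : Lp E 2 lam) : spectralMeasure q η ≪ ρ :=
  ((withDensity_absolutelyContinuous lam _).map hq).trans h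

end NormedGroup

variable {𝕜 : Type*} [RCLike 𝕜] {q : Ω → X}

theorem spectralMeasure_eq_withDensity (hq : Measurable q) {η ψ : Lp 𝕜 2 lam} {g : X → 𝕜}
    (hg : Measurable g) (h : η =ᵐ[lam] fun z => g (q z) * ψ z) :
    spectralMeasure q η = (spectralMeasure q ψ).withDensity fun x => (‖g x‖₊ ^ 2 : ℝ≥0) := by
  have hgm : Measurable fun x => ((‖g x‖₊ ^ 2 : ℝ≥0) : ℝ≥0∞) :=
    (hg.nnnorm.pow_const 2).coe_nnreal_ennreal
  have hgq : Measurable fun z => ((‖g (q z)‖₊ ^ 2 : ℝ≥0) : ℝ≥0∞) := hgm.comp hq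
  have hψ : Measurable fun z => ‖ψ z‖ₑ ^ 2 := (Lp.stronglyMeasurable ψ).enorm.pow_const 2
  ext A hA
  rw [withDensity_apply _ hA, spectralMeasure_apply hq η hA, spectralMeasure,
    setLIntegral_map hA hgm hq,
    setLIntegral_withDensity_eq_setLIntegral_mul lam hψ hgq (hq hA)]
  refine lintegral_congr_ae (ae_restrict_of_ae ?_)
  filter_upwards [h] with z hz
  rw [hz, enorm_mul, mul_pow, Pi.mul_apply, mul_comm, ENNReal.coe_pow, ← enorm_eq_nnnorm]

/-- For a weighted composition isometry `U ξ = w · (ξ ∘ T)` with `q ∘ T = r ∘ q`, multiplication by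
`1_A ∘ q` is carried by `U` to multiplication by `1_{r⁻¹ A} ∘ q`. -/
theorem map_spectralMeasure {r : X → X} (hr : Measurable r) (hq : Measurable q) {T : Ω → Ω}
    (hT : Measure.QuasiMeasurePreserving T lam lam) (hqT : ∀ z, q (T z) = r (q z))
    {U : Lp 𝕜 2 lam ≃ₗᵢ[𝕜] Lp 𝕜 2 lam} {w : Ω → 𝕜}
    (hU : ∀ ξ : Lp 𝕜 2 lam, U ξ =ᵐ[lam] fun z => w z * ξ (T z)) (η : Lp 𝕜 2 lam) :
    (spectralMeasure q (U η)).map r = spectralMeasure q η := by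
  ext A hA
  have hmem : MemLp ((q ⁻¹' A).indicator η) 2 lam := (Lp.memLp η).indicator (hq hA)
  have hUind : U hmem.toLp =ᵐ[lam] (q ⁻¹' (r ⁻¹' A)).indicator (U η) := by
    filter_upwards [hU hmem.toLp, hT.ae hmem.coeFn_toLp, hU η] with z hz hTz hUz
    rw [hz, hTz]
    by_cases hzA : r (q z) ∈ A <;> simp [Set.indicator, hqT, hzA, hUz]
  have hind {ζ ζ' : Lp 𝕜 2 lam} {S : Set Ω} (hS : MeasurableSet S) (h : ζ' =ᵐ[lam] S.indicator ζ) :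
      ∫⁻ z in S, ‖ζ z‖ₑ ^ 2 ∂lam = ‖ζ'‖ₑ ^ 2 := by
    rw [← lintegral_enorm_sq_eq, ← lintegral_indicator hS]
    refine lintegral_congr_ae ?_
    filter_upwards [h] with z hz
    by_cases hzS : z ∈ S <;> simp [hz, hzS]
  rw [Measure.map_apply hr hA, spectralMeasure_apply hq _ (hr hA), spectralMeasure_apply hq _ hA,
    hind (hq (hr hA)) hUind, hind (hq hA) hmem.coeFn_toLp, U.enorm_map]

end SpectralMeasure

section Group

theorem eq_zpow_of_map_add_one {G : Type*} [Group G] {g : G} {u : ℤ → G} (h0 : u 0 = 1)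
    (hS : ∀ k, u (k + 1) = g * u k) (k : ℤ) : u k = g ^ k := by
  induction k with
  | zero => rw [h0, zpow_zero]
  | succ k ih => rw [hS, ih, add_comm, zpow_one_add]
  | pred k ih =>
    rw [← mul_right_inj g, ← hS, sub_add_cancel, ih, ← zpow_one_add, add_sub_cancel]

variable {𝕜 E : Type*} [Semiring 𝕜] [SeminormedAddCommGroup E] [Module 𝕜 E] (U : E ≃ₗᵢ[𝕜] E)

theorem zpow_apply_zpow_apply (m n : ℤ) (v : E) : (U ^ m) ((U ^ n) v) = (U ^ (m + n)) v := by
  rw [zpow_add, LinearIsometryEquiv.coe_mul, Function.comp_apply]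

theorem mem_iInter_image_zpow_neg {V : Set E} {ξ : E} :
    ξ ∈ ⋂ n : ℤ, (fun v => (U ^ (-n)) v) '' V ↔ ∀ n : ℤ, (U ^ n) ξ ∈ V := by
  rw [Set.mem_iInter]
  refine forall_congr' fun n => ⟨?_, fun h => ⟨_, h, by simp⟩⟩
  rintro ⟨v, hv, rfl⟩
  simpa [zpow_apply_zpow_apply] using hv

end Group

section BaseMultiples

variable {X Ω 𝕜 : Type*} [MeasurableSpace X] [MeasurableSpace Ω] [RCLike 𝕜] {lam : Measure Ω}

/-- The vectors of `L^p` of the form `(f ∘ q) φ` with `f` measurable, possibly unbounded. -/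
def baseMultiples {p : ℝ≥0∞} (q : Ω → X) (φ : Lp 𝕜 p lam) : Set (Lp 𝕜 p lam) :=
  {ξ | ∃ f : X → 𝕜, Measurable f ∧ ξ =ᵐ[lam] fun z => f (q z) * φ z}

theorem isClosed_baseMultiples {p : ℝ≥0∞} [Fact (1 ≤ p)] (q : Ω → X) (φ : Lp 𝕜 p lam) :
    IsClosed (baseMultiples q φ) := by
  refine isClosed_of_closure_subset fun ξ hξ => ?_
  obtain ⟨ζ, hζ, hlim⟩ := mem_closure_iff_seq_limit.1 hξ
  choose f hf hfζ using hζ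
  obtain ⟨ns, -, hns⟩ := (tendstoInMeasure_of_tendsto_Lp hlim).exists_seq_tendsto_ae
  refine ⟨fun x => limUnder atTop fun k => f (ns k) x,
    (StronglyMeasurable.limUnder fun k => (hf (ns k)).stronglyMeasurable).measurable, ?_⟩
  filter_upwards [hns, ae_all_iff.2 hfζ] with z hz hfz
  simp only [hfz] at hz
  by_cases hφ : φ z = 0
  · simp only [hφ, mul_zero] at hz ⊢
    exact tendsto_nhds_unique hz tendsto_const_nhds
  · have hquot : Tendsto (fun k => f (ns k) (q z)) atTop (𝓝 (ξ z / φ z)) := by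
      simpa [hφ] using hz.div_const (φ z)
    rw [hquot.limUnder_eq, div_mul_cancel₀ _ hφ]

variable {ρ : Measure X} [IsProbabilityMeasure ρ] {r : X → X} {m0 : X → 𝕜} {q : Ω → X} {T : Ω → Ω}
  {U : Lp 𝕜 2 lam ≃ₗᵢ[𝕜] Lp 𝕜 2 lam} {w : Ω → 𝕜} {φ : Lp 𝕜 2 lam}

theorem ae_norm_eq_one_of_backward_orbit (hav : Averaging r ρ) (hr : MeasurePreserving r ρ ρ)
    (hm0 : Measurable m0) (hm0r : (ρ.withDensity fun x => (‖m0 x‖₊ ^ 2 : ℝ≥0)).map r = ρ)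
    (hq : Measurable q) (hqρ : lam.map q ≪ ρ) (hT : Measure.QuasiMeasurePreserving T lam lam)
    (hqT : ∀ z, q (T z) = r (q z))
    (hU : ∀ ξ : Lp 𝕜 2 lam, U ξ =ᵐ[lam] fun z => w z * ξ (T z))
    (hφ : ∀ᵐ z ∂lam, w z * φ (T z) = m0 (q z) * φ z) {ζ : ℕ → Lp 𝕜 2 lam}
    (hζφ : ∀ n, ζ n ∈ baseMultiples q φ) (hUζ : ∀ n, U (ζ (n + 1)) = ζ n) (hζ0 : ζ 0 ≠ 0) :
    ∀ᵐ x ∂ρ, ‖m0 x‖ = 1 := by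
  choose f hf hfζ using hζφ
  have hUf (n : ℕ) : ζ n =ᵐ[lam] fun z => (f (n + 1) (r (q z)) * m0 (q z)) * φ z := by
    rw [← hUζ n]
    filter_upwards [hU (ζ (n + 1)), hT.ae (hfζ (n + 1)), hφ] with z hz hTz hφz
    rw [hz, hTz, hqT, mul_left_comm, hφz, mul_assoc]
  have := isFiniteMeasure_spectralMeasure hq φ
  have := isFiniteMeasure_spectralMeasure hq (ζ 0)
  have hone := ae_eq_one_of_forall_withDensity hav hr (hm0.nnnorm.pow_const 2) hm0r
    (spectralMeasure_absolutelyContinuous hq hqρ φ) (ν := fun n => spectralMeasure q (ζ n))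
    (spectralMeasure_ne_zero hq hζ0)
    (fun n => by
      rw [← hUζ n]
      exact map_spectralMeasure hr.measurable hq hT hqT hU _)
    (fun n => (hf n).nnnorm.pow_const 2)
    (fun n => spectralMeasure_eq_withDensity hq (hf n) (hfζ n))
    (fun n => by
      have hfr := (hf (n + 1)).comp hr.measurable
      simpa [mul_pow] using spectralMeasure_eq_withDensity hq (hfr.mul hm0) (hUf n))
  filter_upwards [hone] with x hx
  rw [← coe_nnnorm, (pow_eq_one_iff_of_nonneg zero_le two_ne_zero).1 hx, NNReal.coe_one]

theorem iInter_image_zpow_neg_eq_singleton_zero (hav : Averaging r ρ)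
    (hr : MeasurePreserving r ρ ρ) (hm0 : Measurable m0)
    (hm0r : (ρ.withDensity fun x => (‖m0 x‖₊ ^ 2 : ℝ≥0)).map r = ρ)
    (hq : Measurable q) (hqρ : lam.map q ≪ ρ) (hT : Measure.QuasiMeasurePreserving T lam lam)
    (hqT : ∀ z, q (T z) = r (q z))
    (hU : ∀ ξ : Lp 𝕜 2 lam, U ξ =ᵐ[lam] fun z => w z * ξ (T z))
    (hφ : ∀ᵐ z ∂lam, w z * φ (T z) = m0 (q z) * φ z) (hnot : ¬∀ᵐ x ∂ρ, ‖m0 x‖ = 1)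
    {V : Set (Lp 𝕜 2 lam)} (h0 : 0 ∈ V) (hV : V ⊆ baseMultiples q φ) :
    ⋂ n : ℤ, (fun ξ => (U ^ (-n)) ξ) '' V = {0} := by
  ext ξ
  rw [mem_iInter_image_zpow_neg, Set.mem_singleton_iff]
  refine ⟨fun hξ => ?_, fun hξ n => by rwa [hξ, map_zero]⟩
  by_contra hξ0
  refine hnot (ae_norm_eq_one_of_backward_orbit hav hr hm0 hm0r hq hqρ hT hqT hU hφ
    (ζ := fun n => (U ^ (-n : ℤ)) ξ) (fun n => hV (hξ _)) (fun n => ?_) (by simpa using hξ0))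
  simpa using zpow_apply_zpow_apply U 1 (-(n + 1 : ℤ)) ξ

end BaseMultiples

section ScalingEquation

theorem IsFiberwiseCounting.ae_mem_NC {X : Type*} [TopologicalSpace X] [FirstCountableTopology X]
    [MeasurableSpace X] [OpensMeasurableSpace X] {r : X → X} {p : ℕ} [NeZero p] {xc : ZMod p → X}
    {ρ : Measure X} {lamC : Measure (Solenoid r)}
    (hlam : IsFiberwiseCounting (NC r xc) ρ lamC) : ∀ᵐ z ∂lamC, z ∈ NC r xc (z.1 0) := by
  have hE : MeasurableSet {z : Solenoid r | ∃ i, Tendsto (fun n : ℕ => z.1 (p * n)) atTop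
      (𝓝 (xc i))} := by
    rw [Set.ofPred_exists]
    exact .iUnion fun i => measurableSet_tendsto (𝓝 (xc i)) fun n => measurable_coe_apply r _
  exact (hlam.ae_mem hE fun x ω hω => hω.2).mono fun z hz => ⟨rfl, hz⟩

theorem mul_scalingFn_shiftHat {X : Type*} {r : X → X} {p : ℕ} {α : ZMod p → ℂ} {m0 : X → ℂ}
    {z : Solenoid r} {ι : Solenoid r → ZMod p} (hα : α (ι z) ≠ 0)
    (hcard : Nat.card (r ⁻¹' {r (z.1 0)}) ≠ 0)
    (hmul : Multipliable fun k : ℕ =>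
      normalizedFilter r m0 (α (ι z + (k + 1 : ℕ))) (z.1 ((k : ℤ) + 1)))
    (hι : ι (shiftHat r z) = ι z - 1) :
    α (ι z) * (Real.sqrt (Nat.card (r ⁻¹' {r (z.1 0)})) : ℂ) * scalingFn r α ι m0 (shiftHat r z) =
      m0 (z.1 0) * scalingFn r α ι m0 z := by
  have hsqrt : (Real.sqrt (Nat.card (r ⁻¹' {r (z.1 0)})) : ℂ) ≠ 0 :=
    Complex.ofReal_ne_zero.2 (zero_lt_one.trans_le (one_le_sqrt_natCast hcard)).ne'
  rw [scalingFn_shiftHat hmul hι, normalizedFilter]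
  field_simp

end ScalingEquation

theorem statement12_general
    {X : Type*} [MetricSpace X] [MeasurableSpace X] [OpensMeasurableSpace X]
    (r : X → X) (hr : Measurable r) (ρ : Measure X) [IsProbabilityMeasure ρ]
    (hsi : StronglyInvariant r ρ)
    {p : ℕ} (hp : 0 < p) (xc : ZMod p → X) (hxc : Function.Injective xc)
    (hcyc : ∀ i : ZMod p, r (xc (i + 1)) = xc i)
    (lamC : Measure (Solenoid r)) (hlam : IsFiberwiseCounting (NC r xc) ρ lamC)
    (α : ZMod p → ℂ) (hα : ∀ i, ‖α i‖ = 1)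
    (ι : Solenoid r → ZMod p)
    (hι : ∀ x : X, ∀ ω ∈ NC r xc x,
      Tendsto (fun n : ℕ => ω.1 ((p : ℤ) * (n : ℤ))) atTop (𝓝 (xc (ι ω))))
    (hrep : ∀ i : ZMod p, IsRepellingAt r^[p] (xc i))
    (hrc : ∀ i : ZMod p, ContinuousAt r (xc i))
    (hcc : ∀ i : ZMod p, ∀ᶠ y in 𝓝 (xc i), Nat.card (r ⁻¹' {y}) = Nat.card (r ⁻¹' {xc i}))
    (m0 : X → ℂ) (hm0m : Measurable m0) (hm0b : ∃ M : ℝ, ∀ x, ‖m0 x‖ ≤ M)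
    (β : ℝ → ℝ) (hβmono : MonotoneOn β (Set.Ici 0))
    (hβsum : ∀ A : ℝ, 0 < A → ∀ c : ℝ, 0 < c → c < 1 →
      Summable fun k : ℕ => β (A * c ^ (k + 1)))
    (hβlip : ∀ i : ZMod p, ∀ᶠ y in 𝓝 (xc i), ‖m0 y - m0 (xc i)‖ ≤ β (dist y (xc i)))
    (hqmf : ∀ x : X,
      (Nat.card (r ⁻¹' {x}) : ℝ)⁻¹ * ∑' y : r ⁻¹' {x}, ‖m0 y.1‖ ^ 2 = 1)
    (hlp : ∀ i : ZMod p, m0 (xc i) = α i * (Real.sqrt (Nat.card (r ⁻¹' {r (xc i)})) : ℂ))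
    (U : Lp ℂ 2 lamC ≃ₗᵢ[ℂ] Lp ℂ 2 lamC)
    (hU : ∀ ξ : Lp ℂ 2 lamC, ⇑(U ξ) =ᵐ[lamC]
      fun z => α (ι z) * (Real.sqrt (Nat.card (r ⁻¹' {r (z.1 0)})) : ℂ) * ξ (shiftHat r z))
    (π : (X → ℂ) → (Lp ℂ 2 lamC →L[ℂ] Lp ℂ 2 lamC))
    (hπ : ∀ f : X → ℂ, Measurable f → (∃ M : ℝ, ∀ x, ‖f x‖ ≤ M) →
      ∀ ξ : Lp ℂ 2 lamC, ⇑(π f ξ) =ᵐ[lamC] fun z => f (z.1 0) * ξ z)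
    (φ : Lp ℂ 2 lamC) (hφ : ⇑φ =ᵐ[lamC] scalingFn r α ι m0)
    (hav : Averaging r ρ) (hnot1 : ρ {x : X | ‖m0 x‖ ≠ 1} ≠ 0) :
    ⋂ n : ℤ, (fun ξ => (U ^ (-n)) ξ) '' closure {ξ : Lp ℂ 2 lamC |
      ∃ f : X → ℂ, Measurable f ∧ (∃ M : ℝ, ∀ x, ‖f x‖ ≤ M) ∧ ξ = π f φ} = {0} := by
  have : NeZero p := ⟨hp.ne'⟩
  have hcard (x : X) : Nat.card (r ⁻¹' {x}) ≠ 0 := fun h => by simpa [h] using hqmf x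
  have hm0r : (ρ.withDensity fun x => (‖m0 x‖₊ ^ 2 : ℝ≥0)).map r = ρ := by
    obtain ⟨M, hM⟩ := hm0b
    refine hsi.map_withDensity hr (hm0m.nnnorm.pow_const 2) ⟨M ^ 2, fun x => ?_⟩ hqmf
    exact pow_le_pow_left₀ (norm_nonneg _) (hM x) 2
  have hT : Measure.QuasiMeasurePreserving (shiftHat r) lamC lamC :=
    hlam.quasiMeasurePreserving hsi (measurable_shiftHat r) fun x z => shiftHat_mem_NC hcyc hrc
  have hscale : ∀ᵐ z ∂lamC, α (ι z) * (Real.sqrt (Nat.card (r ⁻¹' {r (z.1 0)})) : ℂ) *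
      φ (shiftHat r z) = m0 (z.1 0) * φ z := by
    filter_upwards [hφ, hT.ae hφ, hlam.ae_mem_NC] with z hz hTz hzN
    rw [hTz, hz]
    exact mul_scalingFn_shiftHat (norm_ne_zero_iff.1 (hα _ ▸ one_ne_zero)) (hcard _)
      (multipliable_normalizedFilter hcard hcyc hα hrep hrc hcc hβmono hβsum hβlip hlp
        (hι _ z hzN))
      (limitIndex_shiftHat hxc hcyc hrc hι hzN)
  have hzero : π 0 φ = 0 := by
    rw [Lp.eq_zero_iff_ae_eq_zero]
    exact (hπ 0 measurable_zero ⟨0, by simp⟩ φ).trans (by simp [EventuallyEq])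
  refine iInter_image_zpow_neg_eq_singleton_zero hav (hsi.measurePreserving hr hcard) hm0m hm0r
    (measurable_coe_apply r 0)
    (hlam.map_absolutelyContinuous (measurable_coe_apply r 0) fun x ω hω => hω.1)
    hT shiftHat_coe_zero hU hscale hnot1
    (subset_closure ⟨0, measurable_zero, ⟨0, by simp⟩, hzero.symm⟩)
    (closure_minimal ?_ (isClosed_baseMultiples _ φ))
  rintro _ ⟨f, hf, hfb, rfl⟩
  exact ⟨f, hf, hπ f hf hfb φ⟩

theorem statement12
    {X : Type*} [MetricSpace X] [CompactSpace X] [MeasurableSpace X] [BorelSpace X]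
    (r : X → X) (hr : Measurable r)
    (hfin : ∀ x : X, (r ⁻¹' {x}).Finite) (hne : ∀ x : X, (r ⁻¹' {x}).Nonempty)
    (ρ : Measure X) [IsProbabilityMeasure ρ]
    (hsi : ∀ f : X → ℝ, Measurable f → (∃ M : ℝ, ∀ x, |f x| ≤ M) →
      ∫ x, f x ∂ρ = ∫ x, (Nat.card (r ⁻¹' {x}) : ℝ)⁻¹ * ∑' y : r ⁻¹' {x}, f y.1 ∂ρ)
    {p : ℕ} (hp : 0 < p) (xc : ZMod p → X) (hxc : Function.Injective xc)
    (hcyc : ∀ i : ZMod p, r (xc (i + 1)) = xc i)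
    (lamC : Measure (Solenoid r))
    (hlam : ∀ F : Solenoid r → ℝ≥0∞, Measurable F →
      ∫⁻ z, F z ∂lamC = ∫⁻ x, ∑' ω : NC r xc x, F ω.1 ∂ρ)
    (α : ZMod p → ℂ) (hα : ∀ i, ‖α i‖ = 1)
    (ι : Solenoid r → ZMod p)
    (hι : ∀ x : X, ∀ ω ∈ NC r xc x,
      Tendsto (fun n : ℕ => ω.1 ((p : ℤ) * (n : ℤ))) atTop (𝓝 (xc (ι ω))))
    (hrep : ∀ i : ZMod p, ∃ c δ : ℝ, 0 < c ∧ c < 1 ∧ 0 < δ ∧ ∀ x : X,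
      0 < dist x (xc i) → dist x (xc i) < δ → c⁻¹ * dist x (xc i) < dist (r^[p] x) (xc i))
    (hrc : ∀ i : ZMod p, ContinuousAt r (xc i))
    (hcc : ∀ i : ZMod p, ∀ᶠ y in 𝓝 (xc i), Nat.card (r ⁻¹' {y}) = Nat.card (r ⁻¹' {xc i}))
    (m0 : X → ℂ) (hm0m : Measurable m0) (hm0b : ∃ M : ℝ, ∀ x, ‖m0 x‖ ≤ M)
    (β : ℝ → ℝ) (hβmono : MonotoneOn β (Set.Ici 0)) (hβ0 : ∀ t : ℝ, 0 ≤ t → 0 ≤ β t)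
    (hβsum : ∀ A : ℝ, 0 < A → ∀ c : ℝ, 0 < c → c < 1 →
      Summable fun k : ℕ => β (A * c ^ (k + 1)))
    (hβlip : ∀ i : ZMod p, ∀ᶠ y in 𝓝 (xc i), ‖m0 y - m0 (xc i)‖ ≤ β (dist y (xc i)))
    (hqmf : ∀ x : X,
      (Nat.card (r ⁻¹' {x}) : ℝ)⁻¹ * ∑' y : r ⁻¹' {x}, ‖m0 y.1‖ ^ 2 = 1)
    (hlp : ∀ i : ZMod p, m0 (xc i) = α i * (Real.sqrt (Nat.card (r ⁻¹' {r (xc i)})) : ℂ))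
    (U : Lp ℂ 2 lamC ≃ₗᵢ[ℂ] Lp ℂ 2 lamC)
    (hU : ∀ ξ : Lp ℂ 2 lamC, ⇑(U ξ) =ᵐ[lamC]
      fun z => α (ι z) * (Real.sqrt (Nat.card (r ⁻¹' {r (z.1 0)})) : ℂ) * ξ (shiftHat r z))
    (π : (X → ℂ) → (Lp ℂ 2 lamC →L[ℂ] Lp ℂ 2 lamC))
    (hπ : ∀ f : X → ℂ, Measurable f → (∃ M : ℝ, ∀ x, ‖f x‖ ≤ M) →
      ∀ ξ : Lp ℂ 2 lamC, ⇑(π f ξ) =ᵐ[lamC] fun z => f (z.1 0) * ξ z)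
    (Upow : ℤ → (Lp ℂ 2 lamC ≃ₗᵢ[ℂ] Lp ℂ 2 lamC))
    (hUpow0 : Upow 0 = LinearIsometryEquiv.refl ℂ (Lp ℂ 2 lamC))
    (hUpowS : ∀ (k : ℤ) (ξ : Lp ℂ 2 lamC), Upow (k + 1) ξ = U (Upow k ξ))
    (φ : Lp ℂ 2 lamC) (hφ : ⇑φ =ᵐ[lamC] scalingFn r α ι m0)
    (hav : Averaging r ρ) (hnot1 : ρ {x : X | ‖m0 x‖ ≠ 1} ≠ 0) :
    ∀ V0 : Set (Lp ℂ 2 lamC),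
      V0 = closure {ξ : Lp ℂ 2 lamC |
        ∃ f : X → ℂ, Measurable f ∧ (∃ M : ℝ, ∀ x, ‖f x‖ ≤ M) ∧ ξ = π f φ} →
      ⋂ n : ℤ, (fun ξ => Upow (-n) ξ) '' V0 = {0} := by
  rintro V0 rfl
  obtain rfl : Upow = fun k => U ^ k :=
    funext (eq_zpow_of_map_add_one hUpow0 fun k => LinearIsometryEquiv.ext (hUpowS k))
  exact statement12_general r hr ρ hsi hp xc hxc hcyc lamC hlam α hα ι hι hrep hrc hcc m0 hm0m hm0b
    β hβmono hβsum hβlip hqmf hlp U hU π hπ φ hφ hav hnot1
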